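/- arXiv:1911.08154 — 6 statements merged into one kernel-verified Lean document; each statement's English description precedes it below -/
import Mathlib

section
/- For every integer k ≥ 2, every forest G satisfies α_k(G) + μ_k(G) = |V(G)|, i.e., every forest is a k-König-Egerváry graph. -/
open SimpleGraph

/-- `l` is a (not necessarily induced) `k`-path in `G`: a list of `k` pairwise distinct
vertices in which consecutive vertices are adjacent. -/
def IsKPath {V : Type*} (G : SimpleGraph V) (k : ℕ) (l : List V) : Prop :=
  l.length = k ∧ l.Nodup ∧ l.Chain' G.Adj

/-- A `k`-matching in `G`: a finite set of pairwise vertex-disjoint `k`-paths. -/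
def IsKMatching {V : Type*} (G : SimpleGraph V) (k : ℕ) (M : Finset (List V)) : Prop :=
  (∀ l ∈ M, IsKPath G k l) ∧
    (M : Set (List V)).Pairwise fun l₁ l₂ => ∀ v ∈ l₁, v ∉ l₂

/-- The `k`-matching number `μ_k(G)`: the maximum cardinality of a `k`-matching. -/
noncomputable def kMatchNum {V : Type*} (G : SimpleGraph V) (k : ℕ) : ℕ :=
  sSup {n | ∃ M : Finset (List V), IsKMatching G k M ∧ M.card = n}

/-- A maximum `k`-matching: a `k`-matching of cardinality `μ_k(G)`. -/
def IsMaxKMatching {V : Type*} (G : SimpleGraph V) (k : ℕ) (M : Finset (List V)) : Prop :=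
  IsKMatching G k M ∧ M.card = kMatchNum G k

/-- A `k`-independent set: a set of vertices whose induced subgraph contains no `k`-path. -/
def IsKIndepSet {V : Type*} (G : SimpleGraph V) (k : ℕ) (S : Finset V) : Prop :=
  ∀ l : List V, IsKPath G k l → ¬ (∀ v ∈ l, v ∈ S)

/-- The `k`-independence number `α_k(G)`. -/
noncomputable def kIndepNum {V : Type*} (G : SimpleGraph V) (k : ℕ) : ℕ :=
  sSup {n | ∃ S : Finset V, IsKIndepSet G k S ∧ S.card = n}

/-- A `k`-vertex cover: a set of vertices meeting every `k`-path of `G`. -/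
def IsKCover {V : Type*} (G : SimpleGraph V) (k : ℕ) (C : Finset V) : Prop :=
  ∀ l : List V, IsKPath G k l → ∃ v ∈ l, v ∈ C

/-- The `k`-vertex cover number `τ_k(G)`. -/
noncomputable def kCoverNum {V : Type*} (G : SimpleGraph V) (k : ℕ) : ℕ :=
  sInf {n | ∃ C : Finset V, IsKCover G k C ∧ C.card = n}

/-- A dissociation set: a set of vertices inducing a subgraph of maximum degree at most 1,
i.e. every vertex of `S` has at most one neighbour inside `S`. -/
def IsDissocSet {V : Type*} (G : SimpleGraph V) (S : Finset V) : Prop :=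
  ∀ v ∈ S, ∀ u ∈ S, ∀ w ∈ S, G.Adj v u → G.Adj v w → u = w

/-- The dissociation number `α₃(G)`. -/
noncomputable def dissNum {V : Type*} (G : SimpleGraph V) : ℕ :=
  sSup {n | ∃ S : Finset V, IsDissocSet G S ∧ S.card = n}

/-- A maximum dissociation set: a dissociation set of cardinality `α₃(G)`. -/
def IsMaxDissocSet {V : Type*} (G : SimpleGraph V) (S : Finset V) : Prop :=
  IsDissocSet G S ∧ S.card = dissNum G

/-- `uv` is an `α₃`-critical edge of `G`: deleting it increases the dissociation number. -/
def IsAlpha3Critical {V : Type*} (G : SimpleGraph V) (u v : V) : Prop :=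
  G.Adj u v ∧ dissNum G < dissNum (G.deleteEdges {s(u, v)})

/-- `uv` is a `μ₃`-critical edge of `G`: deleting it decreases the `3`-matching number. -/
def IsMu3Critical {V : Type*} (G : SimpleGraph V) (u v : V) : Prop :=
  G.Adj u v ∧ kMatchNum (G.deleteEdges {s(u, v)}) 3 < kMatchNum G 3

/-- An insulated `α₃`-critical edge: an `α₃`-critical edge sharing no end-vertex with any
other `α₃`-critical edge. -/
def IsInsulated {V : Type*} (G : SimpleGraph V) (u v : V) : Prop :=
  IsAlpha3Critical G u v ∧
    ∀ x y : V, IsAlpha3Critical G x y → s(x, y) ≠ s(u, v) →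
      x ≠ u ∧ x ≠ v ∧ y ≠ u ∧ y ≠ v

/-- A flexible vertex: one lying in some but not all maximum dissociation sets. -/
def IsFlexible {V : Type*} (G : SimpleGraph V) (v : V) : Prop :=
  (∃ S : Finset V, IsMaxDissocSet G S ∧ v ∈ S) ∧
    (∃ S : Finset V, IsMaxDissocSet G S ∧ v ∉ S)

/-- The set of static-included vertices: vertices lying in every maximum dissociation set. -/
def staticIncluded {V : Type*} (G : SimpleGraph V) : Set V :=
  {v | ∀ S : Finset V, IsMaxDissocSet G S → v ∈ S}

/-- The set of static-excluded vertices: vertices lying in no maximum dissociation set. -/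
def staticExcluded {V : Type*} (G : SimpleGraph V) : Set V :=
  {v | ∀ S : Finset V, IsMaxDissocSet G S → v ∉ S}

/-- The (unordered) edge `uv` occurs as an edge of the path recorded by the list `l`. -/
def EdgeInList {V : Type*} (l : List V) (u v : V) : Prop :=
  ∃ p ∈ l.zip l.tail, p = (u, v) ∨ p = (v, u)

theorem kp_leaf {V : Type*} [Fintype V] [DecidableEq V] (G : SimpleGraph V) (hG : G.IsAcyclic)
    (U : Finset V) (hU : U.Nonempty) :
    ∃ v ∈ U, ∃ u, ∀ w ∈ U, G.Adj v w → w = u := by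
  have hH := hG.induce (U : Set V)
  obtain ⟨x, hx⟩ := hU
  let S : Set ℕ := {n | ∃ (a b : (U : Set V)) (p : (G.induce (U : Set V)).Walk a b),
    p.IsPath ∧ p.length = n}
  have hne : S.Nonempty := ⟨0, ⟨x, hx⟩, ⟨x, hx⟩, Walk.nil, by simp, rfl⟩
  have hbd : BddAbove S := ⟨Fintype.card (U : Set V), by
    rintro n ⟨a, b, p, hp, rfl⟩
    exact hp.length_lt.le⟩
  obtain ⟨a, b, p, hp, hl⟩ := Nat.sSup_mem hne hbd
  refine ⟨a, a.2, p.snd, fun w hw haw => ?_⟩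
  have hadj : (G.induce (U : Set V)).Adj a ⟨w, hw⟩ := haw
  by_cases hs : (⟨w, hw⟩ : (U : Set V)) ∈ p.support
  · have := hH.eq_snd_of_adj_start hp hadj hs
    exact congrArg Subtype.val this
  · have : p.length + 1 ∈ S :=
      ⟨_, _, Walk.cons hadj.symm p, (Walk.cons_isPath_iff _ _).2 ⟨hp, hs⟩, by simp⟩
    have := le_csSup hbd this
    omega

def KPConn {V : Type*} (G : SimpleGraph V) (Q : Finset V) : Prop :=
  ∀ A : V → Prop, (∃ x ∈ Q, A x) → (∃ y ∈ Q, ¬ A y) →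
    ∃ a ∈ Q, ∃ b ∈ Q, G.Adj a b ∧ A a ∧ ¬ A b

theorem kp_helly {V ι : Type*} [Fintype V] [DecidableEq V] [Nonempty ι] (G : SimpleGraph V)
    (hG : G.IsAcyclic) (n : ℕ) : ∀ (U : Finset V) (f : ι → Finset V), U.card = n →
    (∀ i, f i ⊆ U) → (∀ i, (f i).Nonempty) → (∀ i, KPConn G (f i)) →
    ∃ i, ∃ r ∈ f i, ∀ j, r ∉ f j → Disjoint (f i) (f j) := by
  induction n with
  | zero =>
    intro U f hU hf hne _
    obtain ⟨i⟩ := ‹Nonempty ι›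
    obtain ⟨x, hx⟩ := hne i
    have := hf i hx
    simp_all
  | succ n ih =>
    intro U f hU hf hne hc
    obtain ⟨v, hv, u, hu⟩ := kp_leaf G hG U (Finset.card_pos.1 (by omega))
    by_cases hs : ∃ i, f i = {v}
    · obtain ⟨i, hi⟩ := hs
      exact ⟨i, v, by simp [hi], fun j hj => by simp [hi, hj]⟩
    push Not at hs
    have hne' : ∀ i, (f i \ {v}).Nonempty := by
      intro i
      by_contra h
      rw [Finset.not_nonempty_iff_eq_empty, Finset.sdiff_eq_empty_iff_subset] at h
      rcases Finset.subset_singleton_iff.1 h with h | h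
      · exact (hne i).ne_empty h
      · exact hs i h
    have hu' : ∀ i, v ∈ f i → u ∈ f i ∧ u ≠ v := by
      intro i hi
      obtain ⟨y, hy⟩ := hne' i
      simp only [Finset.mem_sdiff, Finset.mem_singleton] at hy
      obtain ⟨a, ha, b, hb, hab, rfl, h2⟩ := hc i (fun z => z = v) ⟨v, hi, rfl⟩ ⟨y, hy.1, hy.2⟩
      have := hu b (hf i hb) hab
      subst this
      exact ⟨hb, h2⟩
    obtain ⟨i, r, hr, h⟩ := ih (U \ {v}) (fun i => f i \ {v})
      (by rw [Finset.card_sdiff_of_subset (by simpa using hv)]; simp [hU])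
      (fun i => Finset.sdiff_subset_sdiff (hf i) le_rfl) hne' (by
        intro i A ⟨x, hx, hAx⟩ ⟨y, hy, hAy⟩
        simp only [Finset.mem_sdiff, Finset.mem_singleton] at hx hy ⊢
        by_cases hAu : A u
        · obtain ⟨a, ha, b, hb, hab, h1, h2⟩ := hc i (fun z => z = v ∨ A z)
            ⟨x, hx.1, Or.inr hAx⟩ ⟨y, hy.1, by tauto⟩
          push Not at h2
          have hav : a ≠ v := by
            rintro rfl
            exact h2.2 (hu b (hf i hb) hab ▸ hAu)
          exact ⟨a, ⟨ha, hav⟩, b, ⟨hb, h2.1⟩, hab, by tauto, h2.2⟩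
        · obtain ⟨a, ha, b, hb, hab, h1, h2⟩ := hc i (fun z => z ≠ v ∧ A z)
            ⟨x, hx.1, hx.2, hAx⟩ ⟨y, hy.1, by tauto⟩
          have hbv : b ≠ v := by
            rintro rfl
            exact hAu (hu a (hf i ha) hab.symm ▸ h1.2)
          exact ⟨a, ⟨ha, h1.1⟩, b, ⟨hb, hbv⟩, hab, h1.2, by tauto⟩)
    simp only [Finset.mem_sdiff, Finset.mem_singleton] at hr h
    refine ⟨i, r, hr.1, fun j hj => ?_⟩
    have hd := h j (by tauto)
    rw [Finset.disjoint_left] at hd ⊢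
    intro x hxi hxj
    by_cases hxv : x = v
    · subst hxv
      have h1 := hu' i hxi
      have h2 := hu' j hxj
      exact hd (a := u) (by simp [h1]) (by simp [h2])
    · exact hd (a := x) (by simp [hxi, hxv]) (by simp [hxj, hxv])

theorem kp_chain {V : Type*} (G : SimpleGraph V) (A : V → Prop) : ∀ l : List V,
    l.IsChain G.Adj → (∃ x ∈ l, A x) → (∃ y ∈ l, ¬ A y) →
    ∃ a ∈ l, ∃ b ∈ l, G.Adj a b ∧ A a ∧ ¬ A b
  | [], _, h, _ => by simp at h
  | [x], _, h, h' => by simp at h h'; tauto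
  | x :: y :: l, hc, h, h' => by
    rw [List.isChain_cons_cons] at hc
    have ih := kp_chain G A (y :: l) hc.2
    by_cases h1 : ∃ x ∈ y :: l, A x
    · by_cases h2 : ∃ x ∈ y :: l, ¬ A x
      · obtain ⟨a, ha, b, hb, hh⟩ := ih h1 h2
        exact ⟨a, List.mem_cons_of_mem _ ha, b, List.mem_cons_of_mem _ hb, hh⟩
      · push Not at h2
        have hy := h2 y (by simp)
        obtain ⟨z, hz, hAz⟩ := h'
        rcases List.mem_cons.1 hz with rfl | hz
        · exact ⟨y, by simp, z, by simp, hc.1.symm, hy, hAz⟩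
        · exact absurd (h2 z hz) hAz
    · push Not at h1
      have hy := h1 y (by simp)
      obtain ⟨z, hz, hAz⟩ := h
      rcases List.mem_cons.1 hz with rfl | hz
      · exact ⟨z, by simp, y, by simp, hc.1, hAz, hy⟩
      · exact absurd hAz (h1 z hz)

theorem kp_dual {V : Type*} [Fintype V] [DecidableEq V] (G : SimpleGraph V) (hG : G.IsAcyclic)
    (k : ℕ) (hk : 2 ≤ k) (n : ℕ) : ∀ U : Finset V, U.card = n →
    ∃ (M : Finset (List V)) (C : Finset V), IsKMatching G k M ∧ (∀ l ∈ M, ∀ v ∈ l, v ∈ U) ∧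
      C ⊆ U ∧ M.card = C.card ∧ ∀ l, IsKPath G k l → (∀ v ∈ l, v ∈ U) → ∃ v ∈ l, v ∈ C := by
  classical
  induction n with
  | zero =>
    intro U hU
    refine ⟨∅, ∅, ⟨by simp, by simp⟩, by simp, by simp, rfl, fun l hl h => ?_⟩
    rw [Finset.card_eq_zero] at hU
    subst hU
    match l, hl, h with
    | [], hl, _ => have := hl.1; simp at this; omega
    | a :: l, _, h => exact absurd (h a (by simp)) (by simp)
  | succ n ih =>
    intro U hU
    by_cases hex : ∃ l, IsKPath G k l ∧ ∀ v ∈ l, v ∈ U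
    · let ι := {l : List V // IsKPath G k l ∧ ∀ v ∈ l, v ∈ U}
      haveI : Nonempty ι := ⟨⟨hex.choose, hex.choose_spec⟩⟩
      obtain ⟨⟨P, hP, hPU⟩, r, hr, h⟩ := kp_helly (ι := ι) G hG _ U (fun i => i.1.toFinset) rfl
        (fun i x hx => i.2.2 x (by simpa using hx))
        (fun i => by
          rw [List.toFinset_nonempty_iff]
          intro h0
          have := i.2.1.1
          rw [h0] at this
          simp at this; omega)
        (fun i A h1 h2 => by
          have := kp_chain G A i.1 i.2.1.2.2
          simp only [List.mem_toFinset] at h1 h2 ⊢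
          exact this h1 h2)
      simp only [List.mem_toFinset] at hr h
      obtain ⟨M, C, hM, hMU, hCU, hcard, hcov⟩ := ih (U.erase r)
        (by rw [Finset.card_erase_of_mem (hPU r hr), hU]; rfl)
      have hrM : ∀ l ∈ M, r ∉ l := fun l hl hrl => by simpa using hMU l hl r hrl
      have hdis : ∀ l ∈ M, ∀ v ∈ P, v ∉ l := fun l hl v hv hvl => by
        have := h ⟨l, hM.1 l hl, fun v hv => Finset.mem_of_mem_erase (hMU l hl v hv)⟩ (hrM l hl)
        rw [Finset.disjoint_left] at this
        exact this (List.mem_toFinset.2 hv) (List.mem_toFinset.2 hvl)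
      refine ⟨insert P M, insert r C, ⟨?_, ?_⟩, ?_, ?_, ?_, ?_⟩
      · intro l hl
        rcases Finset.mem_insert.1 hl with rfl | hl
        · exact hP
        · exact hM.1 l hl
      · intro l hl l' hl' hne
        rcases Finset.mem_insert.1 (Finset.mem_coe.1 hl) with rfl | hm <;>
        rcases Finset.mem_insert.1 (Finset.mem_coe.1 hl') with rfl | hm'
        · exact absurd rfl hne
        · exact hdis _ hm'
        · exact fun v hv hv' => hdis _ hm v hv' hv
        · exact hM.2 hm hm' hne
      · intro l hl v hv
        rcases Finset.mem_insert.1 hl with rfl | hl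
        · exact hPU v hv
        · exact Finset.mem_of_mem_erase (hMU l hl v hv)
      · exact Finset.insert_subset (hPU r hr) (hCU.trans (Finset.erase_subset _ _))
      · rw [Finset.card_insert_of_notMem (fun hPM => hrM P hPM hr),
          Finset.card_insert_of_notMem (fun hrC => by simpa using hCU hrC), hcard]
      · intro l hl hlU
        by_cases hrl : r ∈ l
        · exact ⟨r, hrl, by simp⟩
        · obtain ⟨v, hv, hvC⟩ := hcov l hl (fun v hv => Finset.mem_erase.2
            ⟨fun e => hrl (e ▸ hv), hlU v hv⟩)
          exact ⟨v, hv, by simp [hvC]⟩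
    · exact ⟨∅, ∅, ⟨by simp, by simp⟩, by simp, by simp, rfl,
        fun l hl h => absurd ⟨l, hl, h⟩ hex⟩

theorem kp_weak {V : Type*} [Fintype V] [DecidableEq V] (G : SimpleGraph V) (k : ℕ)
    (M : Finset (List V)) (S : Finset V) (hM : IsKMatching G k M) (hS : IsKIndepSet G k S) :
    S.card + M.card ≤ Fintype.card V := by
  have h : ∀ l ∈ M, ∃ v, v ∈ l ∧ v ∉ S := fun l hl => by
    have := hS l (hM.1 l hl)
    push Not at this
    exact this
  rcases M.eq_empty_or_nonempty with rfl | ⟨l₀, hl₀⟩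
  · simpa using Finset.card_le_univ S
  have : Nonempty V := ⟨(h l₀ hl₀).choose⟩
  choose! g hg using h
  have : M.card ≤ Sᶜ.card := by
    refine Finset.card_le_card_of_injOn g (fun l hl => by simpa using (hg l hl).2) ?_
    intro l hl l' hl' e
    by_contra hne
    exact hM.2 hl hl' hne _ (hg l hl).1 (e ▸ (hg l' hl').1)
  have h2 := Finset.card_add_card_compl S
  omega

/-- For every integer `k ≥ 2`, every forest `G` satisfies `α_k(G) + μ_k(G) = |V(G)|`,
i.e. every forest is a `k`-König–Egerváry graph. -/
theorem forest_kIndepNum_add_kMatchNum {V : Type*} [Fintype V] [DecidableEq V]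
    (G : SimpleGraph V) (hG : G.IsAcyclic) (k : ℕ) (hk : 2 ≤ k) :
    kIndepNum G k + kMatchNum G k = Fintype.card V := by
  have hα : BddAbove {n | ∃ S : Finset V, IsKIndepSet G k S ∧ S.card = n} :=
    ⟨Fintype.card V, by rintro n ⟨S, -, rfl⟩; exact Finset.card_le_univ S⟩
  obtain ⟨M, C, hM, -, -, hcard, hcov⟩ := kp_dual G hG k hk _ Finset.univ rfl
  have hC : IsKIndepSet G k Cᶜ := fun l hl h => by
    obtain ⟨v, hv, hvC⟩ := hcov l hl (by simp)
    exact Finset.mem_compl.1 (h v hv) hvC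
  have hμ : BddAbove {n | ∃ M : Finset (List V), IsKMatching G k M ∧ M.card = n} :=
    ⟨Fintype.card V, by
      rintro n ⟨M', hM', rfl⟩
      have := kp_weak G k M' _ hM' hC
      omega⟩
  obtain ⟨S, hS, hSc⟩ := Nat.sSup_mem (s := {n | ∃ S : Finset V, IsKIndepSet G k S ∧ S.card = n}) ⟨_, Cᶜ, hC, rfl⟩ hα
  obtain ⟨N, hN, hNc⟩ := Nat.sSup_mem (s := {n | ∃ M : Finset (List V), IsKMatching G k M ∧ M.card = n}) ⟨_, M, hM, rfl⟩ hμ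
  have h1 := le_csSup hα ⟨Cᶜ, hC, rfl⟩
  have h2 := le_csSup hμ ⟨M, hM, rfl⟩
  have h3 := kp_weak G k N S hN hS
  have h4 := Finset.card_add_card_compl C
  unfold kIndepNum kMatchNum
  omega
end

section
/- For every integer k ≥ 2 and every forest G, the k-vertex cover number equals the k-matching number: τ_k(G) = μ_k(G). -/
open SimpleGraph

/-- Cut formulation of connectedness of a vertex set. -/
def CutConn {V : Type*} (G : SimpleGraph V) (S : Finset V) : Prop :=
  ∀ A : Finset V, A ⊆ S → A.Nonempty → A ≠ S → ∃ a ∈ A, ∃ b ∈ S, b ∉ A ∧ G.Adj a b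

theorem exists_leaf_aux {W : Type*} [Finite W] [Nonempty W] (G : SimpleGraph W)
    (hG : G.IsAcyclic) : ∃ u : W, ∀ x y, G.Adj u x → G.Adj u y → x = y := by
  classical
  have ⟨u, v, p, hp, hmax⟩ := Walk.exists_isPath_forall_isPath_length_le_length G
  refine ⟨u, ?_⟩
  have key : ∀ w, G.Adj u w → w = p.snd := by
    intro w hadj
    apply hG.eq_snd_of_adj_start hp hadj
    by_contra hw
    have h1 : (p.cons hadj.symm).IsPath := hp.cons hw
    have := hmax _ _ _ h1
    simp at this
  intro x y hx hy
  rw [key x hx, key y hy]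

theorem exists_leaf_finset {V : Type*} (G : SimpleGraph V) (hG : G.IsAcyclic)
    (U : Finset V) (hU : U.Nonempty) :
    ∃ u ∈ U, ∀ x ∈ U, ∀ y ∈ U, G.Adj u x → G.Adj u y → x = y := by
  have : Nonempty (U : Set V) := hU.to_subtype
  obtain ⟨u, hu⟩ := exists_leaf_aux (G.induce (U : Set V)) (hG.induce _)
  refine ⟨u.1, u.2, fun x hx y hy hux huy => ?_⟩
  have := hu ⟨x, hx⟩ ⟨y, hy⟩ hux huy
  simpa using this

theorem CutConn.erase_leaf {V : Type*} [DecidableEq V] {G : SimpleGraph V} {S : Finset V}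
    (h : CutConn G S) {u : V} (hu : ∀ x ∈ S, ∀ y ∈ S, G.Adj u x → G.Adj u y → x = y) :
    CutConn G (S.erase u) := by
  by_cases huS : u ∈ S
  swap
  · rwa [Finset.erase_eq_of_notMem huS]
  intro A hA hne hA'
  have huA : u ∉ A := fun h => by simpa using hA h
  have hAS : A ⊆ S := hA.trans (Finset.erase_subset _ _)
  obtain ⟨a, ha, b, hb, hbA, hab⟩ := h A hAS hne (fun h => huA (h ▸ huS))
  by_cases hbu : b = u
  · subst hbu
    obtain ⟨a', ha', b', hb', hbA', hab'⟩ := h (insert b A)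
      (Finset.insert_subset huS hAS) (by simp)
      (fun h => hA' (by rw [← h, Finset.erase_insert huA]))
    simp only [Finset.mem_insert, not_or] at ha' hbA'
    rcases ha' with rfl | ha'
    · have := hu a (hAS ha) b' hb' hab.symm hab'
      subst this
      exact absurd ha hbA'.2
    · exact ⟨a', ha', b', Finset.mem_erase.2 ⟨hbA'.1, hb'⟩, hbA'.2, hab'⟩
  · exact ⟨a, ha, b, Finset.mem_erase.2 ⟨hbu, hb⟩, hbA, hab⟩

theorem key_aux {V ι : Type*} [DecidableEq V] (G : SimpleGraph V) (hG : G.IsAcyclic)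
    (F : Finset ι) (hF : F.Nonempty) (n : ℕ) : ∀ (U : Finset V), U.card = n →
    ∀ S : ι → Finset V, (∀ i ∈ F, S i ⊆ U ∧ (S i).Nonempty ∧ CutConn G (S i)) →
    ∃ i ∈ F, ∃ v ∈ S i, ∀ j ∈ F, (∃ x ∈ S i, x ∈ S j) → v ∈ S j := by
  induction n with
  | zero =>
    intro U hU S hS
    obtain ⟨i, hi⟩ := hF
    obtain ⟨h1, ⟨x, hx⟩, _⟩ := hS i hi
    rw [Finset.card_eq_zero] at hU
    subst hU
    simpa using h1 hx
  | succ n ih =>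
    intro U hU S hS
    obtain ⟨u, huU, hu⟩ := exists_leaf_finset G hG U (Finset.card_pos.1 (by omega))
    by_cases hs : ∃ i ∈ F, S i = {u}
    · obtain ⟨i, hi, hiu⟩ := hs
      refine ⟨i, hi, u, by simp [hiu], ?_⟩
      rintro j hj ⟨x, hx, hxj⟩
      rw [hiu, Finset.mem_singleton] at hx
      exact hx ▸ hxj
    · push Not at hs
      obtain ⟨i, hi, v, hv, hvj⟩ := ih (U.erase u)
        (by rw [Finset.card_erase_of_mem huU]; omega) (fun i => (S i).erase u) (by
          intro i hi
          obtain ⟨h1, h2, h3⟩ := hS i hi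
          refine ⟨Finset.erase_subset_erase _ h1, ?_, h3.erase_leaf
            (fun x hx y hy => hu x (h1 hx) y (h1 hy))⟩
          rw [Finset.nonempty_iff_ne_empty, Ne, Finset.erase_eq_empty_iff]
          rintro (h | h)
          · exact h2.ne_empty h
          · exact hs i hi h)
      refine ⟨i, hi, v, Finset.mem_of_mem_erase hv, ?_⟩
      rintro j hj ⟨x, hxi, hxj⟩
      refine Finset.mem_of_mem_erase (hvj j hj ?_)
      by_cases hxu : x = u
      · subst hxu
        have nb : ∀ i ∈ F, x ∈ S i → ∃ b ∈ S i, G.Adj x b := by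
          intro i hi hx
          obtain ⟨a, ha, b, hb, -, hab⟩ := (hS i hi).2.2 {x} (by simpa using hx) (by simp)
            (fun h => hs i hi h.symm)
          rw [Finset.mem_singleton] at ha
          subst ha
          exact ⟨b, hb, hab⟩
        obtain ⟨b, hb, hab⟩ := nb i hi hxi
        obtain ⟨c, hc, hac⟩ := nb j hj hxj
        have := hu b ((hS i hi).1 hb) c ((hS j hj).1 hc) hab hac
        subst this
        exact ⟨b, Finset.mem_erase.2 ⟨hab.ne', hb⟩, Finset.mem_erase.2 ⟨hab.ne', hc⟩⟩
      · exact ⟨x, Finset.mem_erase.2 ⟨hxu, hxi⟩, Finset.mem_erase.2 ⟨hxu, hxj⟩⟩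

theorem cutConn_of_chain {V : Type*} [DecidableEq V] (G : SimpleGraph V) :
    ∀ l : List V, l.IsChain G.Adj → CutConn G l.toFinset := by
  intro l
  induction l with
  | nil =>
    intro _ A hA hne _
    obtain ⟨x, hx⟩ := hne
    simpa using hA hx
  | cons x l ih =>
    intro hl A hA hne hA'
    cases l with
    | nil =>
      exfalso
      apply hA'
      refine hA.antisymm ?_
      obtain ⟨y, hy⟩ := hne
      have := hA hy
      simp at this
      subst this
      simpa using hy
    | cons y l =>
      rw [List.isChain_cons_cons] at hl
      obtain ⟨hxy, hl⟩ := hl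
      have ih := ih hl
      set T := (y :: l).toFinset with hT
      have hyT : y ∈ T := by simp [hT]
      have hins : (x :: y :: l).toFinset = insert x T := by simp [hT]
      rw [hins] at hA hA' ⊢
      by_cases h1 : (A ∩ T).Nonempty
      · by_cases h2 : A ∩ T = T
        · have hTA : T ⊆ A := by rw [← h2]; exact Finset.inter_subset_left
          have hxA : x ∉ A := fun h => hA' (hA.antisymm (Finset.insert_subset h hTA))
          exact ⟨y, hTA hyT, x, by simp, hxA, hxy.symm⟩
        · obtain ⟨a, ha, b, hb, hbA, hab⟩ := ih (A ∩ T) Finset.inter_subset_right h1 h2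
          exact ⟨a, (Finset.mem_inter.1 ha).1, b, Finset.mem_insert_of_mem hb,
            fun h => hbA (Finset.mem_inter.2 ⟨h, hb⟩), hab⟩
      · have hyA : y ∉ A := fun h => h1 ⟨y, Finset.mem_inter.2 ⟨h, hyT⟩⟩
        obtain ⟨a, ha⟩ := hne
        have haT : a ∉ T := fun h => h1 ⟨a, Finset.mem_inter.2 ⟨ha, h⟩⟩
        have : a = x := by
          rcases Finset.mem_insert.1 (hA ha) with h | h
          · exact h
          · exact absurd h haT
        subst this
        exact ⟨a, ha, y, Finset.mem_insert_of_mem hyT, hyA, hxy⟩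

theorem strong_duality_aux {V : Type*} [Fintype V] [DecidableEq V]
    (G : SimpleGraph V) (hG : G.IsAcyclic) (k : ℕ) (hk : 2 ≤ k) (F : Finset (List V)) :
    (∀ l ∈ F, IsKPath G k l) → ∃ M ⊆ F, IsKMatching G k M ∧
      ∃ C : Finset V, (∀ l ∈ F, ∃ v ∈ l, v ∈ C) ∧ C.card ≤ M.card := by
  induction F using Finset.strongInduction with
  | H F ih =>
    intro hF
    rcases F.eq_empty_or_nonempty with rfl | hne
    · exact ⟨∅, by simp, ⟨by simp, by simp⟩, ∅, by simp, by simp⟩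
    obtain ⟨P, hP, v, hv, hPv⟩ := key_aux G hG F hne _ Finset.univ rfl List.toFinset (by
      intro l hl
      obtain ⟨h1, h2, h3⟩ := hF l hl
      refine ⟨Finset.subset_univ _, ?_, cutConn_of_chain G l h3⟩
      rw [List.toFinset_nonempty_iff]
      rintro rfl
      simp at h1
      omega)
    simp only [List.mem_toFinset] at hv hPv
    obtain ⟨M, hMF, hM, C, hC, hcard⟩ := ih (F.filter (fun l => v ∉ l))
      (Finset.filter_ssubset.2 ⟨P, hP, by simpa using hv⟩)
      (fun l hl => hF l (Finset.mem_filter.1 hl).1)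
    have hPM : P ∉ M := fun h => (Finset.mem_filter.1 (hMF h)).2 hv
    have hdis : ∀ l ∈ M, ∀ x ∈ P, x ∉ l := fun l hl x hx hxl =>
      (Finset.mem_filter.1 (hMF hl)).2 (hPv l (Finset.mem_filter.1 (hMF hl)).1 ⟨x, hx, hxl⟩)
    refine ⟨insert P M, Finset.insert_subset hP (hMF.trans (Finset.filter_subset _ _)),
      ⟨?_, ?_⟩, insert v C, ?_, ?_⟩
    · intro l hl
      rcases Finset.mem_insert.1 hl with rfl | hl
      · exact hF _ hP
      · exact hM.1 l hl
    · intro l hl l' hl' hll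
      rcases Finset.mem_insert.1 hl with h1 | h1 <;>
        rcases Finset.mem_insert.1 hl' with h2 | h2
      · exact absurd (h1.trans h2.symm) hll
      · subst h1
        exact hdis l' h2
      · subst h2
        exact fun x hx hx' => hdis l h1 x hx' hx
      · exact hM.2 h1 h2 hll
    · intro l hl
      by_cases hvl : v ∈ l
      · exact ⟨v, hvl, by simp⟩
      · obtain ⟨x, hx, hxC⟩ := hC l (Finset.mem_filter.2 ⟨hl, hvl⟩)
        exact ⟨x, hx, Finset.mem_insert_of_mem hxC⟩
    · rw [Finset.card_insert_of_notMem hPM]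
      exact (Finset.card_insert_le _ _).trans (by omega)

theorem weak_duality_aux {V : Type*} (G : SimpleGraph V) (k : ℕ) (M : Finset (List V))
    (C : Finset V) (hM : IsKMatching G k M) (hC : IsKCover G k C) : M.card ≤ C.card := by
  classical
  rcases M.eq_empty_or_nonempty with rfl | ⟨l₀, hl₀⟩
  · simp
  have : Nonempty V := ⟨(hC l₀ (hM.1 l₀ hl₀)).choose⟩
  choose! f hf1 hf2 using hC
  refine Finset.card_le_card_of_injOn f (fun l hl => hf2 l (hM.1 l hl)) ?_
  intro l hl l' hl' h
  by_contra hne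
  exact hM.2 hl hl' hne (f l) (hf1 l (hM.1 l hl)) (h ▸ hf1 l' (hM.1 l' hl'))

/-- For every integer `k ≥ 2` and every forest `G`, the `k`-vertex cover number equals
the `k`-matching number: `τ_k(G) = μ_k(G)`. -/
theorem forest_kCoverNum_eq_kMatchNum {V : Type*} [Fintype V] [DecidableEq V]
    (G : SimpleGraph V) (hG : G.IsAcyclic) (k : ℕ) (hk : 2 ≤ k) :
    kCoverNum G k = kMatchNum G k := by
  have hfin : {l : List V | IsKPath G k l}.Finite :=
    (List.finite_length_eq V k).subset (fun l hl => hl.1)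
  obtain ⟨M, -, hM, C, hC, hcard⟩ := strong_duality_aux G hG k hk hfin.toFinset
    (fun l hl => by simpa using hl)
  have hC' : IsKCover G k C := fun l hl => hC l (by simpa using hl)
  have h1 : kCoverNum G k ≤ C.card := Nat.sInf_le ⟨C, hC', rfl⟩
  have h2 : M.card ≤ kMatchNum G k := by
    refine le_csSup ⟨C.card, ?_⟩ ⟨M, hM, rfl⟩
    rintro n ⟨M', hM', rfl⟩
    exact weak_duality_aux G k M' C hM' hC'
  refine le_antisymm (h1.trans (hcard.trans h2)) ?_
  refine csSup_le ⟨_, M, hM, rfl⟩ ?_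
  rintro n ⟨M', hM', rfl⟩
  refine le_csInf ⟨_, C, hC', rfl⟩ ?_
  rintro m ⟨C', hC', rfl⟩
  exact weak_duality_aux G k M' C' hM' hC'
end

section
/- Let G be a 3-König-Egerváry graph and e an edge of G. Then e is α₃-critical in G if and only if both of the following hold: (i) e is μ₃-critical in G, and (ii) G − e is a 3-König-Egerváry graph. -/
open SimpleGraph

theorem weak_duality_aux_s4 {V : Type*} [Fintype V] [DecidableEq V] (H : SimpleGraph V)
    (S : Finset V) (M : Finset (List V)) (hS : IsDissocSet H S) (hM : IsKMatching H 3 M) :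
    S.card + M.card ≤ Fintype.card V := by
  have key : ∀ l ∈ M, ∃ x ∈ l, x ∉ S := by
    intro l hl
    obtain ⟨h1, h2, h3⟩ := hM.1 l hl
    obtain ⟨a, b, c, rfl⟩ := List.length_eq_three.mp h1
    by_contra hcon
    push Not at hcon
    have h3' : List.IsChain H.Adj [a, b, c] := h3
    simp only [List.isChain_cons_cons, List.isChain_singleton, and_true] at h3'
    have hac := hS b (hcon b (by simp)) a (hcon a (by simp)) c (hcon c (by simp))
      h3'.1.symm h3'.2
    subst hac
    simp at h2
  have hle : M.card ≤ Sᶜ.card := by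
    apply Finset.card_le_card_of_forall_subsingleton (fun l x => x ∈ l)
    · intro l hl
      obtain ⟨x, hx, hxS⟩ := key l hl
      exact ⟨x, by simpa using hxS, hx⟩
    · intro x _ l hl l' hl'
      by_contra hne
      exact hM.2 hl.1 hl'.1 hne x hl.2 hl'.2
  rw [Finset.card_compl] at hle
  have := Finset.card_le_univ S
  omega

theorem dissNum_spec_aux {V : Type*} [Fintype V] (H : SimpleGraph V) :
    ∃ S : Finset V, IsDissocSet H S ∧ S.card = dissNum H :=
  Nat.sSup_mem (s := {n | ∃ S : Finset V, IsDissocSet H S ∧ S.card = n})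
    ⟨0, ∅, by simp [IsDissocSet], rfl⟩
    ⟨Fintype.card V, by rintro n ⟨S, -, rfl⟩; exact Finset.card_le_univ S⟩

theorem kMatch_bdd_aux {V : Type*} [Fintype V] [DecidableEq V] (H : SimpleGraph V) :
    BddAbove {n | ∃ M : Finset (List V), IsKMatching H 3 M ∧ M.card = n} :=
  ⟨Fintype.card V, by
    rintro n ⟨M, hM, rfl⟩
    have := weak_duality_aux_s4 H ∅ M (by simp [IsDissocSet]) hM
    omega⟩

theorem kMatchNum_spec_aux {V : Type*} [Fintype V] [DecidableEq V] (H : SimpleGraph V) :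
    ∃ M : Finset (List V), IsKMatching H 3 M ∧ M.card = kMatchNum H 3 :=
  Nat.sSup_mem (s := {n | ∃ M : Finset (List V), IsKMatching H 3 M ∧ M.card = n})
    ⟨0, ∅, by simp [IsKMatching], rfl⟩ (kMatch_bdd_aux H)

theorem duality_num_aux {V : Type*} [Fintype V] [DecidableEq V] (H : SimpleGraph V) :
    dissNum H + kMatchNum H 3 ≤ Fintype.card V := by
  obtain ⟨S, hS, h1⟩ := dissNum_spec_aux H
  obtain ⟨M, hM, h2⟩ := kMatchNum_spec_aux H
  rw [← h1, ← h2]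
  exact weak_duality_aux_s4 H S M hS hM

theorem kMatchNum_delete_aux {V : Type*} [Fintype V] [DecidableEq V] (G : SimpleGraph V)
    (u v : V) : kMatchNum G 3 ≤ kMatchNum (G.deleteEdges {s(u, v)}) 3 + 1 := by
  obtain ⟨M, hM, h2⟩ := kMatchNum_spec_aux G
  have hA : IsKMatching (G.deleteEdges {s(u, v)}) 3 (M.filter (fun l => u ∉ l)) := by
    constructor
    · intro l hl
      rw [Finset.mem_filter] at hl
      obtain ⟨h1, h2, h3⟩ := hM.1 l hl.1
      obtain ⟨a, b, c, rfl⟩ := List.length_eq_three.mp h1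
      refine ⟨h1, h2, ?_⟩
      have h3' : List.IsChain G.Adj [a, b, c] := h3
      have hu := hl.2
      change List.IsChain (G.deleteEdges {s(u, v)}).Adj [a, b, c]
      simp only [List.isChain_cons_cons, List.isChain_singleton, and_true] at h3' ⊢
      simp only [List.mem_cons, List.not_mem_nil, or_false, not_or] at hu
      simp only [SimpleGraph.deleteEdges_adj, Set.mem_singleton_iff, Sym2.eq_iff]
      grind
    · exact hM.2.mono (by intro l hl; simp at hl; exact hl.1)
  have hB : (M.filter (fun l => ¬ u ∉ l)).card ≤ 1 := by
    rw [Finset.card_le_one]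
    intro a ha b hb
    rw [Finset.mem_filter, not_not] at ha hb
    by_contra hne
    exact hM.2 ha.1 hb.1 hne u ha.2 hb.2
  have hC := Finset.card_filter_add_card_filter_not (s := M) (fun l => u ∉ l)
  have hD : (M.filter (fun l => u ∉ l)).card ≤ kMatchNum (G.deleteEdges {s(u, v)}) 3 :=
    le_csSup (kMatch_bdd_aux _) ⟨_, hA, rfl⟩
  omega

/-- Let `G` be a `3`-König–Egerváry graph and `uv` an edge of `G`.  Then `uv` is
`α₃`-critical iff `uv` is `μ₃`-critical and `G - uv` is a `3`-König–Egerváry graph. -/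
theorem alpha3Critical_iff_mu3Critical_of_koenigEgervary {V : Type*} [Fintype V]
    [DecidableEq V] (G : SimpleGraph V)
    (hKE : dissNum G + kMatchNum G 3 = Fintype.card V) (u v : V) (huv : G.Adj u v) :
    IsAlpha3Critical G u v ↔
      IsMu3Critical G u v ∧
        dissNum (G.deleteEdges {s(u, v)}) + kMatchNum (G.deleteEdges {s(u, v)}) 3 =
          Fintype.card V := by
  have h1 := duality_num_aux (G.deleteEdges {s(u, v)})
  have h2 := kMatchNum_delete_aux G u v
  constructor
  · rintro ⟨_, h⟩
    exact ⟨⟨huv, by omega⟩, by omega⟩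
  · rintro ⟨⟨_, h⟩, h'⟩
    exact ⟨huv, by omega⟩
end

section
/- Let T be a tree. An edge of T is α₃-critical if and only if it is μ₃-critical. -/
open SimpleGraph

/-- `B` contains a 3-path. -/
def Has3 {V : Type*} (G : SimpleGraph V) (B : Finset V) : Prop :=
  ∃ a ∈ B, ∃ b ∈ B, ∃ c ∈ B, G.Adj a b ∧ G.Adj b c ∧ a ≠ c

theorem exists_pendant {V : Type*} [DecidableEq V] (G : SimpleGraph V)
    (hG : G.IsAcyclic) (A : Finset V) (hA : Has3 G A) :
    ∃ B ⊆ A, ∃ x ∈ B, Has3 G B ∧ ¬ Has3 G (B.erase x) ∧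
      ∀ p ∈ B.erase x, ∀ q ∈ A \ B, ¬ G.Adj p q := by
  classical
  let P : Finset V → Prop := fun B => B ⊆ A ∧ Has3 G B ∧ ∃ x ∈ B,
    ∀ p ∈ B.erase x, ∀ q ∈ A \ B, ¬ G.Adj p q
  have key : ∀ n, ∀ B : Finset V, B.card = n → P B → ∃ B ⊆ A, ∃ x ∈ B, Has3 G B ∧
      ¬ Has3 G (B.erase x) ∧ ∀ p ∈ B.erase x, ∀ q ∈ A \ B, ¬ G.Adj p q := by
    intro n
    induction n using Nat.strong_induction_on with
    | _ n ih =>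
    rintro B hn ⟨hBA, h3, x, hx, hsep⟩
    by_cases h : Has3 G (B.erase x)
    swap
    · exact ⟨B, hBA, x, hx, h3, h, hsep⟩
    obtain ⟨a, ha, b, hb, c, hc, hab, hbc, hac⟩ := h
    let H : SimpleGraph V :=
      { Adj := fun p q => G.Adj p q ∧ p ∈ B.erase x ∧ q ∈ B.erase x
        symm := ⟨fun p q h => ⟨h.1.symm, h.2.2, h.2.1⟩⟩
        loopless := ⟨fun p h => G.loopless.irrefl p h.1⟩ }
    let C := (B.erase x).filter fun w => H.Reachable a w
    have hCB : C ⊆ B.erase x := Finset.filter_subset _ _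
    have hlt : C.card < n := by
      rw [← hn]
      exact (Finset.card_le_card hCB).trans_lt (Finset.card_erase_lt_of_mem hx)
    have hab' : H.Adj a b := ⟨hab, ha, hb⟩
    have hbc' : H.Adj b c := ⟨hbc, hb, hc⟩
    have haC : a ∈ C := Finset.mem_filter.2 ⟨ha, SimpleGraph.Reachable.refl _⟩
    have hbC : b ∈ C := Finset.mem_filter.2 ⟨hb, hab'.reachable⟩
    have hcC : c ∈ C := Finset.mem_filter.2 ⟨hc, hab'.reachable.trans hbc'.reachable⟩
    have uniq : ∀ y ∈ C, ∀ z ∈ C, G.Adj x y → G.Adj x z → y = z := by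
      intro y hy z hz hxy hxz
      by_contra hyz
      have hbr := SimpleGraph.isAcyclic_iff_forall_adj_isBridge.1 hG hxy
      rw [SimpleGraph.isBridge_iff] at hbr
      apply hbr
      have h1 : H.Reachable z y :=
        (Finset.mem_filter.1 hz).2.symm.trans (Finset.mem_filter.1 hy).2
      refine SimpleGraph.Reachable.trans (v := z) (SimpleGraph.Adj.reachable ?_) (h1.mono ?_)
      · have := hxz.ne
        simp [SimpleGraph.deleteEdges_adj]
        grind
      · intro p q hpq
        obtain ⟨h1, h2, h3⟩ := hpq
        simp [SimpleGraph.deleteEdges_adj]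
        grind
    obtain ⟨y, hyC, hy⟩ : ∃ y ∈ C, ∀ z ∈ C, G.Adj x z → z = y := by
      by_cases hh : ∃ y ∈ C, G.Adj x y
      · obtain ⟨y, hy, hxy⟩ := hh
        exact ⟨y, hy, fun z hz hxz => uniq z hz y hy hxz hxy⟩
      · push Not at hh
        exact ⟨a, haC, fun z hz hxz => absurd hxz (hh z hz)⟩
    refine ih C.card hlt C rfl ⟨hCB.trans ((Finset.erase_subset _ _).trans hBA),
      ⟨a, haC, b, hbC, c, hcC, hab, hbc, hac⟩, y, hyC, ?_⟩
    intro p hp q hq hpq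
    have hpy := Finset.ne_of_mem_erase hp
    have hpC := Finset.mem_of_mem_erase hp
    have hpB := hCB hpC
    obtain ⟨hqA, hqC⟩ := Finset.mem_sdiff.1 hq
    by_cases hqx : q = x
    · subst hqx
      exact hpy (hy p hpC hpq.symm)
    by_cases hqB : q ∈ B
    · have hqB' : q ∈ B.erase x := Finset.mem_erase.2 ⟨hqx, hqB⟩
      have hadj : H.Adj p q := ⟨hpq, hpB, hqB'⟩
      exact hqC (Finset.mem_filter.2 ⟨hqB', (Finset.mem_filter.1 hpC).2.trans hadj.reachable⟩)
    · exact hsep p hpB q (Finset.mem_sdiff.2 ⟨hqA, hqB⟩) hpq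
  obtain ⟨a, ha, _⟩ := id hA
  exact key _ A rfl ⟨Finset.Subset.refl _, hA, a, ha, by simp⟩

theorem exists_pair {V : Type*} [DecidableEq V] (G : SimpleGraph V)
    (hG : G.IsAcyclic) : ∀ n, ∀ A : Finset V, A.card = n → ∃ S ⊆ A, ∃ M : Finset (List V),
      IsDissocSet G S ∧ IsKMatching G 3 M ∧ (∀ l ∈ M, ∀ v ∈ l, v ∈ A) ∧
      S.card + M.card = A.card := by
  intro n
  induction n using Nat.strong_induction_on with
  | _ n ih =>
  intro A hn
  by_cases hA : Has3 G A
  swap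
  · refine ⟨A, Finset.Subset.refl _, ∅, ?_, ?_, by simp, by simp⟩
    · intro v hv u hu w hw h1 h2
      by_contra hne
      exact hA ⟨u, hu, v, hv, w, hw, h1.symm, h2, hne⟩
    · simp [IsKMatching]
  obtain ⟨B, hBA, x, hx, ⟨a, ha, b, hb, c, hc, hab, hbc, hac⟩, hno, hsep⟩ :=
    exists_pendant G hG A hA
  have hpos : 0 < B.card := Finset.card_pos.2 ⟨x, hx⟩
  have hcard := Finset.card_sdiff_add_card_eq_card hBA
  obtain ⟨S, hSA, M, hS, hM, hMA, hSM⟩ := ih (A \ B).card (by omega) (A \ B) rfl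
  have hdisj : Disjoint S (B.erase x) := by
    rw [Finset.disjoint_left]
    intro v hv hv'
    have := hSA hv
    grind
  have hnot : [a, b, c] ∉ M := by
    intro h
    have := hMA _ h a (by simp)
    grind
  have hin : ∀ v ∈ [a, b, c], v ∈ B := by simp [ha, hb, hc]
  refine ⟨S ∪ B.erase x, ?_, insert [a, b, c] M, ?_, ⟨?_, ?_⟩, ?_, ?_⟩
  · grind
  · have cross : ∀ p ∈ S, ∀ q ∈ B.erase x, ¬ G.Adj q p := fun p hp q hq =>
      hsep q hq p (hSA hp)
    intro v hv u hu w hw h1 h2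
    by_cases hvS : v ∈ S
    · have hu' : u ∈ S := by
        by_contra h
        exact cross v hvS u ((Finset.mem_union.1 hu).resolve_left h) h1.symm
      have hw' : w ∈ S := by
        by_contra h
        exact cross v hvS w ((Finset.mem_union.1 hw).resolve_left h) h2.symm
      exact hS v hvS u hu' w hw' h1 h2
    · have hvB := (Finset.mem_union.1 hv).resolve_left hvS
      have hu' : u ∈ B.erase x :=
        (Finset.mem_union.1 hu).resolve_left fun h => cross u h v hvB h1
      have hw' : w ∈ B.erase x :=
        (Finset.mem_union.1 hw).resolve_left fun h => cross w h v hvB h2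
      by_contra hne
      exact hno ⟨u, hu', v, hvB, w, hw', h1.symm, h2, hne⟩
  · intro l hl
    rcases Finset.mem_insert.1 hl with rfl | hl
    · refine ⟨rfl, ?_, ?_⟩
      · simp [hab.ne, hbc.ne, hac]
      · show List.IsChain G.Adj [a, b, c]
        simp [hab, hbc]
    · exact hM.1 l hl
  · intro l₁ h₁ l₂ h₂ hne v hv1 hv2
    rcases Finset.mem_insert.1 (Finset.mem_coe.1 h₁) with e1 | h₁' <;>
    rcases Finset.mem_insert.1 (Finset.mem_coe.1 h₂) with e2 | h₂'
    · exact hne (e1.trans e2.symm)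
    · subst e1
      exact (Finset.mem_sdiff.1 (hMA _ h₂' v hv2)).2 (hin v hv1)
    · subst e2
      exact (Finset.mem_sdiff.1 (hMA _ h₁' v hv1)).2 (hin v hv2)
    · exact hM.2 (Finset.mem_coe.2 h₁') (Finset.mem_coe.2 h₂') hne v hv1 hv2
  · intro l hl v hv
    rcases Finset.mem_insert.1 hl with rfl | hl
    · exact hBA (hin v hv)
    · exact (Finset.mem_sdiff.1 (hMA l hl v hv)).1
  · rw [Finset.card_union_of_disjoint hdisj, Finset.card_insert_of_notMem hnot,
      Finset.card_erase_of_mem hx]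
    omega

theorem upper {V : Type*} [Fintype V] [DecidableEq V] (G : SimpleGraph V)
    (S : Finset V) (hS : IsDissocSet G S) (M : Finset (List V)) (hM : IsKMatching G 3 M) :
    S.card + M.card ≤ Fintype.card V := by
  have h : ∀ l : List V, l ∈ M → ∃ v ∈ l, v ∉ S := by
    intro l hl
    obtain ⟨h1, h2, h3⟩ := hM.1 l hl
    obtain ⟨a, b, c, rfl⟩ := List.length_eq_three.1 h1
    replace h3 : List.IsChain G.Adj [a, b, c] := h3
    by_contra hcon
    push Not at hcon
    simp at hcon h2 h3
    obtain ⟨ha, hb, hc⟩ := hcon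
    exact h2.1.2 (hS b hb a ha c hc h3.1.symm h3.2)
  choose f hf hfS using h
  have hle : M.card ≤ (Sᶜ).card := by
    rw [← Finset.card_attach]
    refine Finset.card_le_card_of_injOn (fun l => f l.1 l.2) ?_ ?_
    · intro l _
      simp [hfS]
    · intro l _ l' _ heq
      by_contra hne
      have heq' : f l.1 l.2 = f l'.1 l'.2 := heq
      refine hM.2 (Finset.mem_coe.2 l.2) (Finset.mem_coe.2 l'.2)
        (fun h => hne (Subtype.ext h)) _ (hf l.1 l.2) ?_
      rw [heq']
      exact hf l'.1 l'.2
  have := Finset.card_add_card_compl S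
  omega

theorem koenig {V : Type*} [Fintype V] [DecidableEq V] (G : SimpleGraph V)
    (hG : G.IsAcyclic) : dissNum G + kMatchNum G 3 = Fintype.card V := by
  have e1 : IsDissocSet G ∅ := by simp [IsDissocSet]
  have e2 : IsKMatching G 3 ∅ := by simp [IsKMatching]
  have b1 : BddAbove {n | ∃ S : Finset V, IsDissocSet G S ∧ S.card = n} := by
    refine ⟨Fintype.card V, ?_⟩
    rintro n ⟨S, hS, rfl⟩
    exact Finset.card_le_univ S
  have b2 : BddAbove {n | ∃ M : Finset (List V), IsKMatching G 3 M ∧ M.card = n} := by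
    refine ⟨Fintype.card V, ?_⟩
    rintro n ⟨M, hM, rfl⟩
    have := upper G ∅ e1 M hM
    simpa using this
  obtain ⟨S, hS, hSc⟩ := Nat.sSup_mem
    (show {n | ∃ S : Finset V, IsDissocSet G S ∧ S.card = n}.Nonempty from ⟨0, ∅, e1, rfl⟩) b1
  obtain ⟨M, hM, hMc⟩ := Nat.sSup_mem
    (show {n | ∃ M : Finset (List V), IsKMatching G 3 M ∧ M.card = n}.Nonempty from ⟨0, ∅, e2, rfl⟩) b2
  obtain ⟨S', -, M', hS', hM', -, hc⟩ := exists_pair G hG _ Finset.univ rfl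
  have h1 := le_csSup b1 (a := S'.card) ⟨S', hS', rfl⟩
  have h2 := le_csSup b2 (a := M'.card) ⟨M', hM', rfl⟩
  have h3 := upper G S hS M hM
  rw [Finset.card_univ] at hc
  unfold dissNum kMatchNum
  omega

/-- In a tree, an edge is `α₃`-critical iff it is `μ₃`-critical. -/
theorem tree_alpha3Critical_iff_mu3Critical {V : Type*} [Fintype V] [DecidableEq V]
    (T : SimpleGraph V) (hT : T.IsTree) (u v : V) (huv : T.Adj u v) :
    IsAlpha3Critical T u v ↔ IsMu3Critical T u v := by
  have h1 := koenig T hT.isAcyclic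
  have h2 := koenig (T.deleteEdges {s(u, v)})
    (hT.isAcyclic.anti (SimpleGraph.deleteEdges_le _))
  unfold IsAlpha3Critical IsMu3Critical
  constructor
  · rintro ⟨h, h'⟩
    exact ⟨h, by omega⟩
  · rintro ⟨h, h'⟩
    exact ⟨h, by omega⟩
end

section
/- Let T be a tree. Then every maximum dissociation set of T contains at least one end-vertex of each α₃-critical edge of T. -/
open SimpleGraph

theorem aux_bdd {V : Type*} [Fintype V] (G : SimpleGraph V) :
    BddAbove {n | ∃ S : Finset V, IsDissocSet G S ∧ S.card = n} := by
  refine ⟨Fintype.card V, ?_⟩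
  rintro n ⟨S, -, rfl⟩
  exact Finset.card_le_univ S

theorem aux_exists {V : Type*} [Fintype V] (G : SimpleGraph V) :
    ∃ S : Finset V, IsDissocSet G S ∧ S.card = dissNum G :=
  Nat.sSup_mem (s := {n | ∃ S : Finset V, IsDissocSet G S ∧ S.card = n})
    ⟨0, ∅, by simp [IsDissocSet], rfl⟩ (aux_bdd G)

theorem aux_le {V : Type*} [Fintype V] (G : SimpleGraph V) {S : Finset V}
    (h : IsDissocSet G S) : S.card ≤ dissNum G :=
  le_csSup (aux_bdd G) ⟨S, h, rfl⟩

/-- Gluing two dissociation sets along a cut whose only edge is `uv`. -/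
theorem aux_glue {V : Type*} [DecidableEq V] (T : SimpleGraph V) (u v w : V)
    (hw : w = u ∨ w = v) (A : V → Prop) [DecidablePred A]
    (hA : ∀ x y, (T.deleteEdges {s(u, v)}).Adj x y → (A x ↔ A y))
    (P Q : Finset V) (hP : IsDissocSet (T.deleteEdges {s(u, v)}) P)
    (hQ : IsDissocSet (T.deleteEdges {s(u, v)}) Q)
    (hwn : w ∉ P.filter A ∪ Q.filter (fun x => ¬ A x)) :
    IsDissocSet T (P.filter A ∪ Q.filter (fun x => ¬ A x)) := by
  set R := P.filter A ∪ Q.filter (fun x => ¬ A x) with hR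
  have key : ∀ x ∈ R, ∀ y ∈ R, T.Adj x y → (T.deleteEdges {s(u, v)}).Adj x y := by
    intro x hx y hy h
    rw [SimpleGraph.deleteEdges_adj]
    refine ⟨h, ?_⟩
    intro h'
    simp only [Set.mem_singleton_iff, Sym2.eq_iff] at h'
    grind
  intro x hx y hy z hz h1 h2
  have k1 := key x hx y hy h1
  have k2 := key x hx z hz h2
  have a1 := hA _ _ k1
  have a2 := hA _ _ k2
  have m : ∀ t ∈ R, (A t → t ∈ P) ∧ (¬ A t → t ∈ Q) := by
    intro t ht
    simp only [hR, Finset.mem_union, Finset.mem_filter] at ht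
    tauto
  by_cases hx' : A x
  · exact hP x ((m x hx).1 hx') y ((m y hy).1 (a1.1 hx')) z ((m z hz).1 (a2.1 hx')) k1 k2
  · exact hQ x ((m x hx).2 hx') y ((m y hy).2 (fun h => hx' (a1.2 h))) z
      ((m z hz).2 (fun h => hx' (a2.2 h))) k1 k2

/-- Every maximum dissociation set of a tree contains at least one end-vertex of each
`α₃`-critical edge. -/
theorem tree_maxDissoc_meets_alpha3Critical {V : Type*} [Fintype V] [DecidableEq V]
    (T : SimpleGraph V) (hT : T.IsTree) :
    ∀ u v : V, IsAlpha3Critical T u v →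
      ∀ S : Finset V, IsMaxDissocSet T S → u ∈ S ∨ v ∈ S := by
  classical
  rintro u v ⟨huv, hlt⟩ S ⟨hS, hcard⟩
  by_contra hcon
  push Not at hcon
  obtain ⟨hu, hv⟩ := hcon
  obtain ⟨S', hS', hcard'⟩ := aux_exists (T.deleteEdges {s(u, v)})
  have hbr : ¬ (T.deleteEdges {s(u, v)}).Reachable u v := by
    have h := SimpleGraph.isAcyclic_iff_forall_adj_isBridge.1 hT.isAcyclic huv
    rw [SimpleGraph.isBridge_iff] at h
    grind
  have hA : ∀ x y, (T.deleteEdges {s(u, v)}).Adj x y →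
      ((T.deleteEdges {s(u, v)}).Reachable u x ↔ (T.deleteEdges {s(u, v)}).Reachable u y) :=
    fun x y h => ⟨fun k => k.trans h.reachable, fun k => k.trans h.symm.reachable⟩
  have hSd : IsDissocSet (T.deleteEdges {s(u, v)}) S := fun x hx y hy z hz h1 h2 =>
    hS x hx y hy z hz (SimpleGraph.deleteEdges_le _ h1) (SimpleGraph.deleteEdges_le _ h2)
  set A : V → Prop := fun x => (T.deleteEdges {s(u, v)}).Reachable u x with hAdef
  have hAu : A u := SimpleGraph.Reachable.refl u
  have hAv : ¬ A v := hbr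
  have h1 := aux_le T (aux_glue T u v v (Or.inr rfl) A hA S' S hS' hSd (by simp [hAv, hv]))
  have h2 := aux_le T (aux_glue T u v u (Or.inl rfl) A hA S S' hSd hS' (by simp [hAu, hu]))
  have dj : ∀ P Q : Finset V, Disjoint (P.filter A) (Q.filter (fun x => ¬ A x)) := by
    intro P Q
    rw [Finset.disjoint_left]
    intro x hx hx'
    exact (Finset.mem_filter.1 hx').2 (Finset.mem_filter.1 hx).2
  rw [Finset.card_union_of_disjoint (dj _ _)] at h1 h2
  have c1 := Finset.card_filter_add_card_filter_not (s := S) A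
  have c2 := Finset.card_filter_add_card_filter_not (s := S') A
  omega
end

section
/- Let T be a tree, let 𝒜_T denote the set of static-included vertices of T, and let η(T) denote the number of α₃-critical edges of T. Then α₃(T) = |𝒜_T| + η(T). -/
open SimpleGraph

section Aux
open Classical Finset

variable {V : Type*}

def IsP3 (G : SimpleGraph V) (P : Finset V) : Prop :=
  ∃ a b c : V, P = {a, b, c} ∧ G.Adj a b ∧ G.Adj b c ∧ a ≠ c

lemma p3_hit {G : SimpleGraph V} {P S : Finset V} (hP : IsP3 G P) (hS : IsDissocSet G S) :
    ∃ z ∈ P, z ∉ S := by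
  obtain ⟨a, b, c, rfl, hab, hbc, hac⟩ := hP
  by_contra! h
  exact hac (hS b (h b (by simp)) a (h a (by simp)) c (h c (by simp)) hab.symm hbc)

lemma not_dissoc_p3 {G : SimpleGraph V} {S : Finset V} (hS : ¬ IsDissocSet G S) :
    ∃ a b c, a ∈ S ∧ b ∈ S ∧ c ∈ S ∧ G.Adj a b ∧ G.Adj b c ∧ a ≠ c := by
  unfold IsDissocSet at hS
  push Not at hS
  obtain ⟨v, hv, u, hu, w, hw, h1, h2, h3⟩ := hS
  exact ⟨u, v, w, hu, hv, hw, h1.symm, h2, h3⟩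

section fin
variable [Fintype V]

lemma diss_bdd (G : SimpleGraph V) :
    BddAbove {n | ∃ S : Finset V, IsDissocSet G S ∧ S.card = n} := by
  refine ⟨Fintype.card V, ?_⟩
  rintro n ⟨S, -, rfl⟩
  exact S.card_le_univ

lemma le_diss {G : SimpleGraph V} {S : Finset V} (h : IsDissocSet G S) : S.card ≤ dissNum G :=
  le_csSup (diss_bdd G) ⟨S, h, rfl⟩

lemma exists_max_diss (G : SimpleGraph V) : ∃ S : Finset V, IsMaxDissocSet G S := by
  have := Nat.sSup_mem (s := {n | ∃ S : Finset V, IsDissocSet G S ∧ S.card = n})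
    ⟨0, ∅, by intro v hv; simp at hv, rfl⟩ (diss_bdd G)
  exact this

end fin

/-- hitting sets of a packing -/
lemma hit_sum {M : Finset (Finset V)} (hM : (M : Set (Finset V)).PairwiseDisjoint id)
    (C : Finset V) : ∑ P ∈ M, (P ∩ C).card = (M.biUnion (fun P => P ∩ C)).card := by
  rw [Finset.card_biUnion]
  intro P hP Q hQ hne
  exact (hM hP hQ hne).mono inter_subset_left inter_subset_left

lemma hit_le {M : Finset (Finset V)} (hM : (M : Set (Finset V)).PairwiseDisjoint id)
    {C : Finset V} (hC : ∀ P ∈ M, ∃ z ∈ P, z ∈ C) : M.card ≤ C.card := by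
  calc M.card = ∑ P ∈ M, 1 := by simp
    _ ≤ ∑ P ∈ M, (P ∩ C).card := by
        apply Finset.sum_le_sum
        intro P hP
        obtain ⟨z, h1, h2⟩ := hC P hP
        exact card_pos.2 ⟨z, mem_inter.2 ⟨h1, h2⟩⟩
    _ = _ := hit_sum hM C
    _ ≤ _ := card_le_card (by intro x; simp)

lemma hit_exact {M : Finset (Finset V)} (hM : (M : Set (Finset V)).PairwiseDisjoint id)
    {C : Finset V} (hC : ∀ P ∈ M, ∃ z ∈ P, z ∈ C) (hc : C.card = M.card) :
    (∀ P ∈ M, (P ∩ C).card = 1) ∧ ∀ x ∈ C, ∃ P ∈ M, x ∈ P := by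
  have h1 : ∀ P ∈ M, 1 ≤ (P ∩ C).card := by
    intro P hP
    obtain ⟨z, h1, h2⟩ := hC P hP
    exact card_pos.2 ⟨z, mem_inter.2 ⟨h1, h2⟩⟩
  have hsub : M.biUnion (fun P => P ∩ C) ⊆ C := by intro x; simp
  have h2 := hit_sum hM C
  have h3 := card_le_card hsub
  have h4 : ∑ P ∈ M, 1 ≤ ∑ P ∈ M, (P ∩ C).card := Finset.sum_le_sum h1
  have h5 : ∑ P ∈ M, 1 = M.card := by simp
  refine ⟨?_, ?_⟩
  · have := (Finset.sum_eq_sum_iff_of_le h1).1 (by omega)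
    intro P hP
    exact (this P hP).symm
  · have := eq_of_subset_of_card_le hsub (by omega)
    intro x hx
    rw [← this] at hx
    simp at hx
    tauto

lemma swap_card {M : Finset (Finset V)} {P : Finset V} (hP : P ∈ M)
    {C1 C2 C : Finset V} (R : V → Prop)
    (hQ : ∀ Q ∈ M, Q ≠ P → (∀ x ∈ Q, R x) ∨ (∀ x ∈ Q, ¬ R x))
    (h1 : (∀ P ∈ M, (P ∩ C1).card = 1) ∧ ∀ x ∈ C1, ∃ P ∈ M, x ∈ P)
    (h2 : (∀ P ∈ M, (P ∩ C2).card = 1) ∧ ∀ x ∈ C2, ∃ P ∈ M, x ∈ P)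
    (hC : ∀ x, x ∈ C ↔ (x ∈ C2 ∧ R x) ∨ (x ∈ C1 ∧ ¬ R x))
    (hPC : ∀ x ∈ P, x ∉ C) : C.card < M.card := by
  have hsub : C ⊆ (M.erase P).biUnion (fun Q => Q ∩ C) := by
    intro x hx
    have : ∃ Q ∈ M, x ∈ Q := by
      rcases (hC x).1 hx with h | h
      · exact h2.2 x h.1
      · exact h1.2 x h.1
    obtain ⟨Q, hQM, hxQ⟩ := this
    simp only [mem_biUnion, mem_erase, mem_inter]
    refine ⟨Q, ⟨?_, hQM⟩, hxQ, hx⟩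
    rintro rfl
    exact hPC x hxQ hx
  have hb : ∀ Q ∈ M.erase P, (Q ∩ C).card ≤ 1 := by
    intro Q hQ'
    rw [mem_erase] at hQ'
    rcases hQ Q hQ'.2 hQ'.1 with h | h
    · rw [← h2.1 Q hQ'.2]
      apply card_le_card
      intro x
      simp only [mem_inter, hC]
      intro hx
      have := h x hx.1
      tauto
    · rw [← h1.1 Q hQ'.2]
      apply card_le_card
      intro x
      simp only [mem_inter, hC]
      intro hx
      have := h x hx.1
      tauto
  have e1 := card_le_card hsub
  have e2 := card_biUnion_le_card_mul (M.erase P) (fun Q => Q ∩ C) 1 hb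
  have e3 := card_erase_of_mem hP
  have e4 : 0 < M.card := card_pos.2 ⟨P, hP⟩
  omega

/-- minimal branch -/
lemma branch {G : SimpleGraph V} (hG : G.IsAcyclic) (U : Finset V) :
    ∀ n : ℕ, ∀ (B : Finset V) (v : V), B.card ≤ n → B ⊆ U → v ∈ B →
      (∀ x ∈ B, ∀ y ∈ U, y ∉ B → G.Adj x y → x = v) → ¬ IsDissocSet G B →
      ∃ (B' : Finset V) (v' : V), B' ⊆ U ∧ v' ∈ B' ∧
      (∀ x ∈ B', ∀ y ∈ U, y ∉ B' → G.Adj x y → x = v') ∧ ¬ IsDissocSet G B' ∧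
      IsDissocSet G (B'.erase v') := by
  intro n
  induction n with
  | zero =>
    intro B v hB _ hv
    have : B = ∅ := by simpa using hB
    subst this
    simp at hv
  | succ n ih =>
    intro B v hB hBU hv hedge hnd
    by_cases hd : IsDissocSet G (B.erase v)
    · exact ⟨B, v, hBU, hv, hedge, hnd, hd⟩
    obtain ⟨a, b, c, ha, hb, hc, hab, hbc, hac⟩ := not_dissoc_p3 hd
    let H : SimpleGraph V :=
      { Adj := fun x y => G.Adj x y ∧ x ∈ B.erase v ∧ y ∈ B.erase v
        symm := ⟨fun x y h => ⟨h.1.symm, h.2.2, h.2.1⟩⟩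
        loopless := ⟨fun x h => G.loopless.irrefl x h.1⟩ }
    let C := (B.erase v).filter (fun x => H.Reachable b x)
    have memC : ∀ x, x ∈ C ↔ x ∈ B.erase v ∧ H.Reachable b x := by
      intro x; simp [C]
    have hbC : b ∈ C := (memC b).2 ⟨hb, Reachable.refl _⟩
    have haC : a ∈ C := (memC a).2 ⟨ha, Adj.reachable (G := H) ⟨hab.symm, hb, ha⟩⟩
    have hcC : c ∈ C := (memC c).2 ⟨hc, Adj.reachable (G := H) ⟨hbc, hb, hc⟩⟩
    have hCB : C ⊆ B.erase v := filter_subset _ _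
    have hcard : C.card ≤ n := by
      have := card_le_card hCB
      rw [card_erase_of_mem hv] at this
      omega
    have hCnd : ¬ IsDissocSet G C := fun h => hac (h b hbC a haC c hcC hab.symm hbc)
    -- edges leaving C go to v
    have hleave : ∀ x ∈ C, ∀ y ∈ U, y ∉ C → G.Adj x y → y = v := by
      intro x hx y hy hyC hxy
      by_contra hyv
      have hx' := (memC x).1 hx
      have hxB := mem_erase.1 hx'.1
      by_cases hyB : y ∈ B
      · apply hyC
        refine (memC y).2 ⟨mem_erase.2 ⟨hyv, hyB⟩, hx'.2.trans ?_⟩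
        exact Adj.reachable (G := H) ⟨hxy, hx'.1, mem_erase.2 ⟨hyv, hyB⟩⟩
      · exact hxB.1 (hedge x hxB.2 y hy hyB hxy)
    have huniq : ∀ w ∈ C, ∀ w' ∈ C, G.Adj w v → G.Adj w' v → w = w' := by
      intro w hw w' hw' h1 h2
      by_contra hne
      have hbr := isAcyclic_iff_forall_adj_isBridge.1 hG h1
      rw [isBridge_iff] at hbr
      have hr : H.Reachable w w' := ((memC w).1 hw).2.symm.trans ((memC w').1 hw').2
      have hle : H ≤ G.deleteEdges {s(w, v)} := by
        intro x y hxy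
        have hx := mem_erase.1 hxy.2.1
        have hy := mem_erase.1 hxy.2.2
        simp only [deleteEdges_adj, Set.mem_singleton_iff, Sym2.eq_iff]
        exact ⟨hxy.1, by tauto⟩
      refine hbr ((hr.mono hle).trans (Adj.reachable ?_))
      simp only [deleteEdges_adj, Set.mem_singleton_iff, Sym2.eq_iff]
      refine ⟨h2, ?_⟩
      have := h1.ne
      have := h2.ne
      rintro (h | h)
      · exact hne h.1.symm
      · exact h2.ne h.1
    have hCU : C ⊆ U := fun x hx => hBU (mem_erase.1 (hCB hx)).2
    by_cases hw : ∃ w ∈ C, G.Adj w v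
    · obtain ⟨w, hwC, hwv⟩ := hw
      refine ih C w hcard hCU hwC ?_ hCnd
      intro x hx y hy hyC hxy
      have := hleave x hx y hy hyC hxy
      subst this
      exact huniq x hx w hwC hxy hwv
    · refine ih C b hcard hCU hbC ?_ hCnd
      intro x hx y hy hyC hxy
      have := hleave x hx y hy hyC hxy
      subst this
      exact absurd ⟨x, hx, hxy⟩ hw

lemma koenig_s13 {G : SimpleGraph V} (hG : G.IsAcyclic) :
    ∀ n : ℕ, ∀ U : Finset V, U.card ≤ n → ∃ S ⊆ U, IsDissocSet G S ∧
      ∃ M : Finset (Finset V), (∀ P ∈ M, IsP3 G P ∧ P ⊆ U) ∧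
        (M : Set (Finset V)).PairwiseDisjoint id ∧ U.card ≤ S.card + M.card := by
  intro n
  induction n with
  | zero =>
    intro U hU
    refine ⟨∅, by simp, by intro v hv; simp at hv, ∅, by simp, by simp, by simpa using hU⟩
  | succ n ih =>
    intro U hU
    by_cases hd : IsDissocSet G U
    · exact ⟨U, Subset.rfl, hd, ∅, by simp, by simp, by simp⟩
    obtain ⟨v0, hv0⟩ : U.Nonempty := by
      obtain ⟨a, b, c, ha, _⟩ := not_dissoc_p3 hd
      exact ⟨a, ha⟩
    obtain ⟨B, v, hBU, hv, hedge, hnd, hB⟩ := branch hG U U.card U v0 le_rfl Subset.rfl hv0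
      (fun x _ y hy hy' => absurd hy hy') hd
    have hcardB : (U \ B).card + B.card = U.card := card_sdiff_add_card_eq_card hBU
    have hBpos : 0 < B.card := card_pos.2 ⟨v, hv⟩
    obtain ⟨S, hSU, hS, M, hM, hMd, hle⟩ := ih (U \ B) (by omega)
    obtain ⟨a, b, c, ha, hb, hc, hab, hbc, hac⟩ := not_dissoc_p3 hnd
    have hPB : ({a, b, c} : Finset V) ⊆ B := by
      intro x hx; simp at hx; rcases hx with rfl | rfl | rfl <;> assumption
    have hdisj : ∀ Q ∈ M, Disjoint ({a, b, c} : Finset V) Q := by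
      intro Q hQ
      refine Disjoint.mono hPB (hM Q hQ).2 disjoint_sdiff
    have hPM : ({a, b, c} : Finset V) ∉ M := by
      intro h
      have := hdisj _ h
      rw [disjoint_self] at this
      have h2 : a ∈ ({a, b, c} : Finset V) := by simp
      rw [this] at h2
      simp at h2
    have cross : ∀ x ∈ B.erase v, ∀ y ∈ S, ¬ G.Adj x y := by
      intro x hx y hy hxy
      have := mem_sdiff.1 (hSU hy)
      have hx' := mem_erase.1 hx
      exact hx'.1 (hedge x hx'.2 y this.1 this.2 hxy)
    refine ⟨S ∪ B.erase v, ?_, ?_, insert {a, b, c} M, ?_, ?_, ?_⟩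
    · intro x hx
      rcases mem_union.1 hx with h | h
      · exact (mem_sdiff.1 (hSU h)).1
      · exact hBU (mem_erase.1 h).2
    · intro x hx y hy z hz hxy hxz
      rcases mem_union.1 hx with h | h
      · have hy' : y ∈ S := (mem_union.1 hy).resolve_right fun h' => cross y h' x h hxy.symm
        have hz' : z ∈ S := (mem_union.1 hz).resolve_right fun h' => cross z h' x h hxz.symm
        exact hS x h y hy' z hz' hxy hxz
      · have hy' := (mem_union.1 hy).resolve_left fun h' => cross x h y h' hxy
        have hz' := (mem_union.1 hz).resolve_left fun h' => cross x h z h' hxz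
        exact hB x h y hy' z hz' hxy hxz
    · intro P hP
      rcases mem_insert.1 hP with rfl | h
      · exact ⟨⟨a, b, c, rfl, hab, hbc, hac⟩, hPB.trans hBU⟩
      · exact ⟨(hM P h).1, (hM P h).2.trans sdiff_subset⟩
    · rw [coe_insert]
      refine hMd.insert ?_
      intro Q hQ _
      exact hdisj Q hQ
    · rw [card_insert_of_notMem hPM, card_union_of_disjoint, card_erase_of_mem hv]
      · omega
      · rw [Finset.disjoint_left]
        intro x hx hx'
        exact (mem_sdiff.1 (hSU hx)).2 (mem_erase.1 hx').2

variable [Fintype V]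

/-- If `u, v` lie in no common member of a maximum packing then `uv` is not critical. -/
lemma crit_in_pack {G : SimpleGraph V} {M : Finset (Finset V)}
    (hMP : ∀ P ∈ M, IsP3 G P) (hM : (M : Set (Finset V)).PairwiseDisjoint id)
    (hcard : dissNum G + M.card = Fintype.card V) {u v : V} (hc : IsAlpha3Critical G u v) :
    ∃ P ∈ M, u ∈ P ∧ v ∈ P := by
  by_contra! hno
  obtain ⟨S, hS, hSc⟩ := exists_max_diss (G.deleteEdges {s(u, v)})
  have hlt := hc.2
  rw [← hSc] at hlt
  have : M.card ≤ Sᶜ.card := by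
    apply hit_le hM
    intro P hP
    have hno' := hno P hP
    have : IsP3 (G.deleteEdges {s(u, v)}) P := by
      obtain ⟨a, b, c, hP', hab, hbc, hac⟩ := hMP P hP
      have ha : a ∈ P := by simp [hP']
      have hb : b ∈ P := by simp [hP']
      have hc : c ∈ P := by simp [hP']
      refine ⟨a, b, c, hP', ?_, ?_, hac⟩
      · simp only [deleteEdges_adj, Set.mem_singleton_iff, Sym2.eq_iff]
        refine ⟨hab, ?_⟩
        rintro (⟨rfl, rfl⟩ | ⟨rfl, rfl⟩) <;> tauto
      · simp only [deleteEdges_adj, Set.mem_singleton_iff, Sym2.eq_iff]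
        refine ⟨hbc, ?_⟩
        rintro (⟨rfl, rfl⟩ | ⟨rfl, rfl⟩) <;> tauto
    obtain ⟨z, hz, hz'⟩ := p3_hit this hS
    exact ⟨z, hz, by simpa using hz'⟩
  have h2 := card_compl_add_card S
  omega

lemma crit_omit {G : SimpleGraph V} {u v : V} (hc : IsAlpha3Critical G u v) :
    u ∉ staticIncluded G := by
  obtain ⟨S, hS, hSc⟩ := exists_max_diss (G.deleteEdges {s(u, v)})
  have hlt := hc.2
  rw [← hSc] at hlt
  have hD : IsDissocSet G (S.erase u) := by
    intro x hx y hy z hz hxy hxz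
    rw [mem_erase] at hx hy hz
    refine hS x hx.2 y hy.2 z hz.2 ?_ ?_
    · simp only [deleteEdges_adj, Set.mem_singleton_iff, Sym2.eq_iff]; tauto
    · simp only [deleteEdges_adj, Set.mem_singleton_iff, Sym2.eq_iff]; tauto
  have h1 := le_diss hD
  have h2 := pred_card_le_card_erase (s := S) (a := u)
  intro h
  have := h (S.erase u) ⟨hD, by omega⟩
  simp at this

lemma max_hit {G : SimpleGraph V} {M : Finset (Finset V)}
    (hMP : ∀ P ∈ M, IsP3 G P) (hM : (M : Set (Finset V)).PairwiseDisjoint id)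
    (hcard : dissNum G + M.card = Fintype.card V) {S : Finset V} (hS : IsMaxDissocSet G S) :
    (∀ P ∈ M, (P ∩ Sᶜ).card = 1) ∧ ∀ x ∈ Sᶜ, ∃ P ∈ M, x ∈ P := by
  apply hit_exact hM
  · intro P hP
    obtain ⟨z, hz, hz'⟩ := p3_hit (hMP P hP) hS.1
    exact ⟨z, hz, by simpa using hz'⟩
  · have := card_compl_add_card S
    have := hS.2
    omega

/-- the swap argument -/
lemma swap_crit {G : SimpleGraph V} (hG : G.IsAcyclic) {M : Finset (Finset V)}
    (hMP : ∀ P ∈ M, IsP3 G P) (hM : (M : Set (Finset V)).PairwiseDisjoint id)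
    (hcard : dissNum G + M.card = Fintype.card V) {a b c : V}
    (hP : ({a, b, c} : Finset V) ∈ M) (hab : G.Adj a b) (hbc : G.Adj b c) (hac : a ≠ c)
    (ha : a ∉ staticIncluded G) (hb : b ∉ staticIncluded G ∨ c ∉ staticIncluded G) :
    IsAlpha3Critical G a b := by
  refine ⟨hab, ?_⟩
  have hbr := isAcyclic_iff_forall_adj_isBridge.1 hG hab
  rw [isBridge_iff] at hbr
  have hne1 := hab.ne
  have hne2 := hbc.ne
  let H := G.deleteEdges {s(a, b)}
  have hHadj : ∀ x y, H.Adj x y ↔ G.Adj x y ∧ ¬ ((x = a ∧ y = b) ∨ (x = b ∧ y = a)) := by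
    intro x y
    simp [H, deleteEdges_adj, Sym2.eq_iff]
  have hnr : ¬ H.Reachable a b := hbr
  let R : V → Prop := fun x => H.Reachable a x
  have hRadj : ∀ x y, H.Adj x y → (R x ↔ R y) := fun x y h =>
    ⟨fun h' => h'.trans h.reachable, fun h' => h'.trans h.symm.reachable⟩
  have hRa : R a := Reachable.refl _
  have hRb : ¬ R b := hnr
  have hRc : ¬ R c := by
    rw [← hRadj b c ((hHadj b c).2 ⟨hbc, by grind⟩)]
    exact hRb
  obtain ⟨S1, hS1, ha1⟩ : ∃ S, IsMaxDissocSet G S ∧ a ∉ S := by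
    simpa [staticIncluded] using ha
  obtain ⟨S2, hS2, hb2⟩ : ∃ S, IsMaxDissocSet G S ∧ (b ∉ S ∨ c ∉ S) := by
    rcases hb with h | h
    · obtain ⟨S, h1, h2⟩ : ∃ S, IsMaxDissocSet G S ∧ b ∉ S := by simpa [staticIncluded] using h
      exact ⟨S, h1, Or.inl h2⟩
    · obtain ⟨S, h1, h2⟩ : ∃ S, IsMaxDissocSet G S ∧ c ∉ S := by simpa [staticIncluded] using h
      exact ⟨S, h1, Or.inr h2⟩
  have hh1 := max_hit hMP hM hcard hS1
  have hh2 := max_hit hMP hM hcard hS2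
  have one : ∀ S : Finset V, (({a, b, c} : Finset V) ∩ Sᶜ).card = 1 →
      ∀ x ∈ ({a, b, c} : Finset V), ∀ y ∈ ({a, b, c} : Finset V), x ∉ S → y ∉ S → x = y := by
    intro S hS x hx y hy hxS hyS
    exact card_le_one.1 hS.le x (by simp only [mem_inter, mem_compl]; exact ⟨hx, hxS⟩)
      y (by simp only [mem_inter, mem_compl]; exact ⟨hy, hyS⟩)
  have o1 := one S1 (hh1.1 _ hP)
  have o2 := one S2 (hh2.1 _ hP)
  have hb1 : b ∈ S1 := by
    by_contra h
    exact hne1 (o1 a (by simp) b (by simp) ha1 h)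
  have hc1 : c ∈ S1 := by
    by_contra h
    exact hac (o1 a (by simp) c (by simp) ha1 h)
  have ha2 : a ∈ S2 := by
    by_contra h
    rcases hb2 with h' | h'
    · exact hne1 (o2 a (by simp) b (by simp) h h')
    · exact hac (o2 a (by simp) c (by simp) h h')
  let S : Finset V := univ.filter (fun x => (x ∈ S2 ∧ R x) ∨ (x ∈ S1 ∧ ¬ R x))
  have memS : ∀ x, x ∈ S ↔ (x ∈ S2 ∧ R x) ∨ (x ∈ S1 ∧ ¬ R x) := by intro x; simp [S]
  have hSd : IsDissocSet H S := by
    intro x hx y hy z hz hxy hxz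
    have e1 := hRadj x y hxy
    have e2 := hRadj x z hxz
    rw [memS] at hx hy hz
    have g1 := ((hHadj _ _).1 hxy).1
    have g2 := ((hHadj _ _).1 hxz).1
    by_cases hR : R x
    · have r : ∀ t, (t ∈ S2 ∧ R t) ∨ (t ∈ S1 ∧ ¬ R t) → R t → t ∈ S2 :=
        fun t ht hRt => ht.elim (fun h => h.1) (fun h => absurd hRt h.2)
      exact hS2.1 x (r x hx hR) y (r y hy (e1.1 hR)) z (r z hz (e2.1 hR)) g1 g2
    · have r : ∀ t, (t ∈ S2 ∧ R t) ∨ (t ∈ S1 ∧ ¬ R t) → ¬ R t → t ∈ S1 :=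
        fun t ht hRt => ht.elim (fun h => absurd h.2 hRt) (fun h => h.1)
      exact hS1.1 x (r x hx hR) y (r y hy (fun h => hR (e1.2 h))) z
        (r z hz (fun h => hR (e2.2 h))) g1 g2
  have hlt : Sᶜ.card < M.card := by
    refine swap_card hP R ?_ hh1 hh2 ?_ ?_
    · intro Q hQ hQP
      have hdis := hM hQ hP hQP
      have haQ : a ∉ Q := fun h => by
        have := Finset.disjoint_left.1 hdis h
        simp at this
      obtain ⟨x, y, z, hQ', hxy, hyz, hxz⟩ := hMP Q hQ
      have hxa : a ≠ x := by rintro rfl; simp [hQ'] at haQ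
      have hya : a ≠ y := by rintro rfl; simp [hQ'] at haQ
      have hza : a ≠ z := by rintro rfl; simp [hQ'] at haQ
      have e1 := hRadj x y ((hHadj _ _).2 ⟨hxy, by grind⟩)
      have e2 := hRadj y z ((hHadj _ _).2 ⟨hyz, by grind⟩)
      rw [hQ']
      simp only [mem_insert, mem_singleton, forall_eq_or_imp, forall_eq]
      rw [e1, e2]
      by_cases hz : R z
      · exact Or.inl ⟨hz, hz, hz⟩
      · exact Or.inr ⟨hz, hz, hz⟩
    · intro x
      rw [mem_compl, mem_compl, mem_compl, memS]
      by_cases h : R x <;> simp [h]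
    · intro x hx
      rw [mem_compl, memS, not_not]
      simp only [mem_insert, mem_singleton] at hx
      rcases hx with h | h | h
      · rw [h]; exact Or.inl ⟨ha2, hRa⟩
      · rw [h]; exact Or.inr ⟨hb1, hRb⟩
      · rw [h]; exact Or.inr ⟨hc1, hRc⟩
  have := le_diss hSd
  have := card_compl_add_card S
  show dissNum G < dissNum H
  omega

lemma crit_symm {G : SimpleGraph V} {u v : V} (h : IsAlpha3Critical G u v) :
    IsAlpha3Critical G v u := by
  refine ⟨h.1.symm, ?_⟩
  rw [Sym2.eq_swap]
  exact h.2

lemma count_aux {W : Type*} {a b c : V} (hab : a ≠ b) (hbc : b ≠ c) (hac : a ≠ c) (p : V → Prop)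
    {A B : Prop} {x y : W} (hxy : x ≠ y)
    (k1 : p a → (p b ∨ p c) → A) (k2 : p c → (p b ∨ p a) → B) (k3 : A → p a ∧ p b)
    (k4 : B → p c ∧ p b) (k5 : p a ∨ p b ∨ p c) :
    (({a, b, c} : Finset V).filter p).card =
      ((if A then ({x} : Finset W) else ∅) ∪ (if B then {y} else ∅)).card + 1 := by
  by_cases pa : p a <;> by_cases pb : p b <;> by_cases pc : p c <;>
    by_cases hA : A <;> by_cases hB : B <;>
    simp only [pa, pb, pc, hA, hB, true_or, or_true, or_self, and_true, true_and, and_false,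
      false_and, and_self, imp_false, not_true, false_imp_iff, true_imp_iff] at k1 k2 k3 k4 k5 <;>
    simp [filter_insert, filter_singleton, pa, pb, pc, hA, hB, hab, hbc, hac, hxy]

lemma local_count {G : SimpleGraph V} (hG : G.IsAcyclic) {M : Finset (Finset V)}
    (hMP : ∀ P ∈ M, IsP3 G P) (hM : (M : Set (Finset V)).PairwiseDisjoint id)
    (hcard : dissNum G + M.card = Fintype.card V) {P : Finset V} (hP : P ∈ M) :
    (P.filter (fun x => x ∉ staticIncluded G)).card =
      (univ.filter (fun e : Sym2 V => (∃ u v, e = s(u, v) ∧ IsAlpha3Critical G u v) ∧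
        ∀ x ∈ e, x ∈ P)).card + 1 := by
  obtain ⟨a, b, c, rfl, hab, hbc, hac⟩ := hMP P hP
  have hne1 := hab.ne
  have hne2 := hbc.ne
  have hnac : ¬ G.Adj a c := by
    intro h
    have hbr := isAcyclic_iff_forall_adj_isBridge.1 hG h
    rw [isBridge_iff] at hbr
    refine hbr (Reachable.trans (v := b) (Adj.reachable ?_) (Adj.reachable ?_))
    · simp only [deleteEdges_adj, Set.mem_singleton_iff, Sym2.eq_iff]; grind
    · simp only [deleteEdges_adj, Set.mem_singleton_iff, Sym2.eq_iff]; grind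
  have k1 : a ∉ staticIncluded G → (b ∉ staticIncluded G ∨ c ∉ staticIncluded G) →
    IsAlpha3Critical G a b := swap_crit hG hMP hM hcard hP hab hbc hac
  have hP' : ({c, b, a} : Finset V) ∈ M := by
    have : ({c, b, a} : Finset V) = {a, b, c} := by ext; simp; tauto
    rwa [this]
  have k2 : c ∉ staticIncluded G → (b ∉ staticIncluded G ∨ a ∉ staticIncluded G) →
    IsAlpha3Critical G c b := swap_crit hG hMP hM hcard hP' hbc.symm hab.symm hac.symm
  have k3 : IsAlpha3Critical G a b → a ∉ staticIncluded G ∧ b ∉ staticIncluded G :=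
    fun h => ⟨crit_omit h, crit_omit (crit_symm h)⟩
  have k4 : IsAlpha3Critical G c b → c ∉ staticIncluded G ∧ b ∉ staticIncluded G :=
    fun h => ⟨crit_omit h, crit_omit (crit_symm h)⟩
  have k5 : a ∉ staticIncluded G ∨ b ∉ staticIncluded G ∨ c ∉ staticIncluded G := by
    obtain ⟨S, hS⟩ := exists_max_diss G
    obtain ⟨z, hz, hz'⟩ := p3_hit (hMP _ hP) hS.1
    have : z ∉ staticIncluded G := fun h => hz' (h S hS)
    simp only [mem_insert, mem_singleton] at hz
    rcases hz with rfl | rfl | rfl <;> tauto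
  have hE : (univ.filter (fun e : Sym2 V => (∃ u v, e = s(u, v) ∧ IsAlpha3Critical G u v) ∧
        ∀ x ∈ e, x ∈ ({a, b, c} : Finset V))) =
      (if IsAlpha3Critical G a b then {s(a, b)} else ∅) ∪
      (if IsAlpha3Critical G c b then {s(c, b)} else ∅) := by
    ext e
    simp only [mem_filter, mem_univ, true_and, mem_union]
    constructor
    · rintro ⟨⟨u, v, rfl, huv⟩, hx⟩
      have hu := hx u (by simp)
      have hv := hx v (by simp)
      have huv' := huv.1
      have hsy := crit_symm huv
      simp only [mem_insert, mem_singleton] at hu hv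
      rcases hu with rfl | rfl | rfl <;> rcases hv with rfl | rfl | rfl <;>
        first
        | exact absurd huv' (G.loopless.irrefl _)
        | exact absurd huv' hnac
        | exact absurd huv'.symm hnac
        | (simp [huv, hsy, Sym2.eq_swap])
    · rintro (h | h)
      · split_ifs at h with hc
        · rw [mem_singleton] at h
          subst h
          exact ⟨⟨a, b, rfl, hc⟩, by simp⟩
        · simp at h
      · split_ifs at h with hc
        · rw [mem_singleton] at h
          subst h
          exact ⟨⟨c, b, rfl, hc⟩, by simp⟩
        · simp at h
  rw [hE]
  have hs : s(a, b) ≠ s(c, b) := by rw [Ne, Sym2.eq_iff]; grind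
  convert count_aux hne1 hne2 hac (fun x => x ∉ staticIncluded G) hs k1 k2 k3 k4 k5

end Aux

theorem tree_dissNum_eq_staticIncluded_add_criticalEdges {V : Type*} [Fintype V]
    [DecidableEq V] (T : SimpleGraph V) (hT : T.IsTree) :
    dissNum T = (staticIncluded T).ncard +
      {e : Sym2 V | ∃ u v : V, e = s(u, v) ∧ IsAlpha3Critical T u v}.ncard := by
  classical
  have hG := hT.isAcyclic
  obtain ⟨S, -, hS, M, hM', hM, hle⟩ := koenig_s13 hG _ (Finset.univ : Finset V) le_rfl
  have hMP : ∀ P ∈ M, IsP3 T P := fun P hP => (hM' P hP).1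
  have hcard : dissNum T + M.card = Fintype.card V := by
    have h1 := le_diss hS
    obtain ⟨S', hS', hc'⟩ := exists_max_diss T
    have h2 : M.card ≤ S'ᶜ.card := by
      apply hit_le (by convert hM)
      intro P hP
      obtain ⟨z, hz, hz'⟩ := p3_hit (hMP P hP) hS'
      exact ⟨z, hz, by simpa using hz'⟩
    have h3 := Finset.card_compl_add_card S'
    rw [Finset.card_univ] at hle
    omega
  set X : Finset V := Finset.univ.filter (fun x => x ∉ staticIncluded T) with hX
  set E : Finset (Sym2 V) :=
    Finset.univ.filter (fun e => ∃ u v : V, e = s(u, v) ∧ IsAlpha3Critical T u v) with hE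
  have hXu : X = M.biUnion (fun P => P.filter (fun x => x ∉ staticIncluded T)) := by
    ext x
    simp only [hX, Finset.mem_filter, Finset.mem_univ, true_and, Finset.mem_biUnion]
    constructor
    · intro hx
      obtain ⟨S, hS, hxS⟩ : ∃ S, IsMaxDissocSet T S ∧ x ∉ S := by simpa [staticIncluded] using hx
      obtain ⟨P, hP, hxP⟩ := (max_hit hMP hM hcard hS).2 x (by simpa using hxS)
      exact ⟨P, hP, hxP, hx⟩
    · rintro ⟨P, -, -, h⟩
      exact h
  have hEu : E = M.biUnion (fun P => Finset.univ.filter (fun e : Sym2 V =>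
      (∃ u v, e = s(u, v) ∧ IsAlpha3Critical T u v) ∧ ∀ x ∈ e, x ∈ P)) := by
    ext e
    simp only [hE, Finset.mem_filter, Finset.mem_univ, true_and, Finset.mem_biUnion]
    constructor
    · rintro ⟨u, v, rfl, h⟩
      obtain ⟨P, hP, hu, hv⟩ := crit_in_pack hMP hM hcard h
      refine ⟨P, hP, ⟨u, v, rfl, h⟩, ?_⟩
      intro x hx
      rcases Sym2.mem_iff.1 hx with rfl | rfl <;> assumption
    · rintro ⟨P, -, h, -⟩
      exact h
  have cX : X.card = ∑ P ∈ M, (P.filter (fun x => x ∉ staticIncluded T)).card := by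
    rw [hXu]
    apply Finset.card_biUnion
    intro P hP Q hQ hne
    exact (hM hP hQ hne).mono (Finset.filter_subset _ _) (Finset.filter_subset _ _)
  have cE : E.card = ∑ P ∈ M, (Finset.univ.filter (fun e : Sym2 V =>
      (∃ u v, e = s(u, v) ∧ IsAlpha3Critical T u v) ∧ ∀ x ∈ e, x ∈ P)).card := by
    rw [hEu]
    apply Finset.card_biUnion
    intro P hP Q hQ hne
    refine Finset.disjoint_left.2 ?_
    intro e he he'
    simp only [Finset.mem_filter, Finset.mem_univ, true_and] at he he'
    obtain ⟨⟨u, v, rfl, -⟩, h⟩ := he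
    exact Finset.disjoint_left.1 (hM hP hQ hne) (h u (by simp)) (he'.2 u (by simp))
  have hsum : X.card = E.card + M.card := by
    rw [cX, cE, Finset.card_eq_sum_ones M, ← Finset.sum_add_distrib]
    refine Finset.sum_congr rfl fun P hP => ?_
    convert local_count hG hMP hM hcard hP
  have n1 : {e : Sym2 V | ∃ u v : V, e = s(u, v) ∧ IsAlpha3Critical T u v}.ncard = E.card := by
    rw [← Set.ncard_coe_finset]
    congr 1
    ext e
    simp [hE]
  have n2 : (staticIncluded T).ncard = Xᶜ.card := by
    rw [← Set.ncard_coe_finset]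
    congr 1
    ext e
    simp [hX]
  have n3 := Finset.card_compl_add_card X
  rw [n1, n2]
  omega
end
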